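/- Let f(u) = C₁u⁴ + C₂u³ + C₃u² + C₄u + C₅ be a quartic polynomial with real coefficients and let u(t,x) be a smooth real-valued solution of the gKN equation with f, such that u_x(t,x) ≠ 0 for all (t,x). Define T₂ₐ(t,x) = (1/2)·u_xxx²/u_x² − (3/8)·u_xx⁴/u_x⁴ + (5/6)·u_xx²·f(u)/u_x⁴ + (1/18)·f(u)²/u_x⁴ − (5/9)·f''(u) and X₂ₐ(t,x) = −u_xxxxx·u_xxx/u_x² + (1/2)·u_xxxx²/u_x² + u_xxxx·u_xxx·u_xx/u_x³ + (1/6)·u_xxxx·u_xx·(9u_xx² − 10f(u))/u_x⁴ + 3·u_xxx³/u_x³ − (2/3)·u_xxx²·(9u_xx² − 2f(u))/u_x⁴ + (1/9)·u_xxx·(15u_xx² + 2f(u))·f(u)/u_x⁵ + (5/3)·u_xxx·u_xx·f'(u)/u_x³ + (9/8)·u_xx⁶/u_x⁶ − (29/12)·u_xx⁴·f(u)/u_x⁶ − (1/6)·u_xx³·f'(u)/u_x⁴ + (19/18)·u_xx²·f(u)²/u_x⁶ − (5/6)·u_xx²·f''(u)/u_x² − (5/9)·u_xx·f(u)·f'(u)/u_x⁴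 − (4/9)·u_xx·f'''(u) + (1/27)·f(u)³/u_x⁶ + (5/18)·(2f(u)f''(u) − f'(u)²)/u_x² + (2/9)·u_x²·f''''(u), where all derivatives of u are evaluated at (t,x). Then ∂_t T₂ₐ(t,x) + ∂_x X₂ₐ(t,x) = 0 at every point (t,x). -/

import Mathlib

open Real

/-- Partial derivative with respect to the second (spatial) variable. -/
noncomputable def pdx (u : ℝ → ℝ → ℝ) : ℝ → ℝ → ℝ := fun t x => deriv (fun y => u t y) x

/-- Partial derivative with respect to the first (time) variable. -/
noncomputable def pdt (u : ℝ → ℝ → ℝ) : ℝ → ℝ → ℝ := fun t x => deriv (fun s => u s x) t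

/-- `u` solves the generalized Krichever-Novikov equation with nonlinearity `f`:
`u_t = u_xxx - (3/2) u_xx^2/u_x + f(u)/u_x`. -/
def isGKN (f : ℝ → ℝ) (u : ℝ → ℝ → ℝ) : Prop :=
  ∀ t x, pdt u t x =
    pdx (pdx (pdx u)) t x - (3/2) * (pdx (pdx u) t x)^2 / pdx u t x + f (u t x) / pdx u t x

/-- A conservation law: `∂_t T + ∂_x X = 0` at every point. -/
def consLaw (T X : ℝ → ℝ → ℝ) : Prop := ∀ t x, pdt T t x + pdx X t x = 0

/-- The conserved density `T₂ₐ`. -/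
noncomputable def T2a (f : ℝ → ℝ) (u : ℝ → ℝ → ℝ) : ℝ → ℝ → ℝ := fun t x =>
  (1/2) * (pdx (pdx (pdx u)) t x)^2 / (pdx u t x)^2 - (3/8) * (pdx (pdx u) t x)^4 / (pdx u t x)^4
    + (5/6) * (pdx (pdx u) t x)^2 * (f (u t x)) / (pdx u t x)^4 + (1/18) * (f (u t x))^2 / (pdx u t x)^4 - (5/9) * (deriv (deriv f) (u t x))

/-- The flux `X₂ₐ` corresponding to `T₂ₐ`. -/
noncomputable def X2a (f : ℝ → ℝ) (u : ℝ → ℝ → ℝ) : ℝ → ℝ → ℝ := fun t x =>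
  -((pdx (pdx (pdx (pdx (pdx u)))) t x) * (pdx (pdx (pdx u)) t x) / (pdx u t x)^2) + (1/2) * (pdx (pdx (pdx (pdx u))) t x)^2 / (pdx u t x)^2
    + (pdx (pdx (pdx (pdx u))) t x) * (pdx (pdx (pdx u)) t x) * (pdx (pdx u) t x) / (pdx u t x)^3
    + (1/6) * (pdx (pdx (pdx (pdx u))) t x) * (pdx (pdx u) t x) * (9 * (pdx (pdx u) t x)^2 - 10 * (f (u t x))) / (pdx u t x)^4
    + 3 * (pdx (pdx (pdx u)) t x)^3 / (pdx u t x)^3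
    - (2/3) * (pdx (pdx (pdx u)) t x)^2 * (9 * (pdx (pdx u) t x)^2 - 2 * (f (u t x))) / (pdx u t x)^4
    + (1/9) * (pdx (pdx (pdx u)) t x) * (15 * (pdx (pdx u) t x)^2 + 2 * (f (u t x))) * (f (u t x)) / (pdx u t x)^5
    + (5/3) * (pdx (pdx (pdx u)) t x) * (pdx (pdx u) t x) * (deriv f (u t x)) / (pdx u t x)^3
    + (9/8) * (pdx (pdx u) t x)^6 / (pdx u t x)^6 - (29/12) * (pdx (pdx u) t x)^4 * (f (u t x)) / (pdx u t x)^6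
    - (1/6) * (pdx (pdx u) t x)^3 * (deriv f (u t x)) / (pdx u t x)^4
    + (19/18) * (pdx (pdx u) t x)^2 * (f (u t x))^2 / (pdx u t x)^6
    - (5/6) * (pdx (pdx u) t x)^2 * (deriv (deriv f) (u t x)) / (pdx u t x)^2
    - (5/9) * (pdx (pdx u) t x) * (f (u t x)) * (deriv f (u t x)) / (pdx u t x)^4
    - (4/9) * (pdx (pdx u) t x) * (deriv (deriv (deriv f)) (u t x)) + (1/27) * (f (u t x))^3 / (pdx u t x)^6
    + (5/18) * (2 * (f (u t x)) * (deriv (deriv f) (u t x)) - (deriv f (u t x))^2) / (pdx u t x)^2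
    + (2/9) * (pdx u t x)^2 * (deriv (deriv (deriv (deriv f))) (u t x))

/-!
Let `w = u_xx / u_x` be the pre-Schwarzian of `u` in `x`, `S = w_x - w² / 2` its Schwarzian, and
`h = f(u) / u_x²`. The equation reads `u_t = u_x K` with `K = S + h`, and it implies
`S_t = K_xxx + 2 S K_x + S_x K` and `h_t = K h_x - 2 K_x h`.
These two evolution equations alone make `∂_t (K (S + h / 9) / 2)` equal, up to an `x`-derivative,
to `2 / 9` times Bol's operator
`h_xxxxx + 10 S h_xxx + 15 S_x h_xx + (9 S_xx + 16 S²) h_x + (2 S_xxx + 16 S S_x) h`,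
and by Bol's lemma the latter is `u_x³ f⁽⁵⁾(u)`, which vanishes for quartic `f`. Finally `T₂ₐ`
differs from `K (S + h / 9) / 2` only by the `x`-derivative of `w³ / 2 - 5 (w h + f'(u) / u_x) / 9`.
-/

open Function
open scoped ContDiff

section DifferentialAlgebra

variable {k A : Type*} [CommRing k] [CommRing A] [Algebra k A] {D Dt : Derivation k A A} {p : Aˣ}

theorem derivation_ofNat (n : ℕ) [n.AtLeastTwo] : D (ofNat(n) : A) = 0 :=
  D.map_natCast n

theorem derivation_units_inv {c : A} (hp : D p = c * p) : D ↑p⁻¹ = -(c * ↑p⁻¹) := by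
  rw [D.leibniz_of_mul_eq_one p.inv_mul, hp, smul_eq_mul]
  linear_combination -c * ↑p⁻¹ * p.inv_mul

theorem derivation_units_pow {c : A} (hp : D p = c * p) (n : ℕ) :
    D (p ^ n : A) = n * c * p ^ n := by
  cases n with
  | zero => simp
  | succ n =>
    rw [Derivation.leibniz_pow, hp, Nat.add_sub_cancel, nsmul_eq_mul, smul_eq_mul]
    ring

/-- The pre-Schwarzian derivative `p' / p = u_xx / u_x` of a function `u` with derivative
`p = u_x`. -/
def preSchwarzian (D : Derivation k A A) (p : Aˣ) : A :=
  ↑p⁻¹ * D p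

/-- The function `u_x ^ (n - 2) * f⁽ⁿ⁾(u)`, where `p` stands for `u_x` and `φ n` for `f⁽ⁿ⁾(u)`.
For `n = 0` it is the term `h = f(u) / u_x²` of the equation `u_t = u_x (S + h)`. The factor `p⁻²`
is kept separate so that the exponents are natural numbers. -/
def weightedJet (p : Aˣ) (φ : ℕ → A) (n : ℕ) : A :=
  ↑p⁻¹ ^ 2 * p ^ n * φ n

theorem derivation_units : D p = preSchwarzian D p * p := by
  rw [preSchwarzian, mul_right_comm, p.inv_mul, one_mul]

theorem derivation_weightedJet {φ : ℕ → A} {c K : A} (hp : D p = c * p)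
    (hφ : ∀ n, D (φ n) = p * K * φ (n + 1)) (n : ℕ) :
    D (weightedJet p φ n) =
      K * weightedJet p φ (n + 1) + ((n : A) - 2) * c * weightedJet p φ n := by
  simp only [weightedJet, Derivation.leibniz, Derivation.leibniz_pow, derivation_units_pow hp,
    derivation_units_inv hp, hφ, nsmul_eq_mul, smul_eq_mul]
  ring

theorem derivation_weightedJet_of_chain {φ : ℕ → A} (hφ : ∀ n, D (φ n) = p * φ (n + 1)) (n : ℕ) :
    D (weightedJet p φ n) =
      weightedJet p φ (n + 1) + ((n : A) - 2) * preSchwarzian D p * weightedJet p φ n := by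
  simpa only [one_mul] using
    derivation_weightedJet (D := D) (p := p) (φ := φ) (K := 1) derivation_units
      (fun m => (hφ m).trans (by rw [mul_one])) n

section Evolution

variable {K : A} (hp : Dt p = D (p * K))

include hp

theorem units_evolution : Dt p = (D K + preSchwarzian D p * K) * p := by
  rw [hp, Derivation.leibniz, derivation_units, smul_eq_mul, smul_eq_mul]
  ring

theorem weightedJet_zero_evolution {φ : ℕ → A} (hφ : ∀ n, D (φ n) = p * φ (n + 1))
    (hφt : ∀ n, Dt (φ n) = p * K * φ (n + 1)) :
    Dt (weightedJet p φ 0) = K * D (weightedJet p φ 0) - 2 * D K * weightedJet p φ 0 := by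
  rw [derivation_weightedJet (units_evolution hp) hφt, derivation_weightedJet_of_chain hφ]
  push_cast
  ring

theorem preSchwarzian_evolution (hcomm : Function.Commute Dt D) :
    Dt (preSchwarzian D p) = D (D K + preSchwarzian D p * K) := by
  have hpt := units_evolution hp
  have hpxt : Dt (D p) = D (Dt p) := hcomm p
  rw [preSchwarzian, Derivation.leibniz, hpxt, hpt, derivation_units_inv hpt, Derivation.leibniz,
    ← preSchwarzian]
  simp only [smul_eq_mul]
  linear_combination D (D K + preSchwarzian D p * K) * p.inv_mul

end Evolution

end DifferentialAlgebra

section ProjectiveStructure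

variable {k A : Type*} [Field k] [CommRing A] [Algebra k A] {D Dt : Derivation k A A} {p : Aˣ}

/-- The Schwarzian derivative `u_xxx / u_x - (3/2) (u_xx / u_x)²` of a function `u` with derivative
`p = u_x`, written in terms of the pre-Schwarzian `w` as `w' - w² / 2`. -/
def schwarzian (D : Derivation k A A) (p : Aˣ) : A :=
  D (preSchwarzian D p) - (1 / 2 : k) • preSchwarzian D p ^ 2

theorem derivation_preSchwarzian :
    D (preSchwarzian D p) = schwarzian D p + (1 / 2 : k) • preSchwarzian D p ^ 2 :=
  (sub_add_cancel _ _).symm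

/-- Bol's fifth-order differential operator. Its kernel is spanned by the products of four solutions
of `y'' + (S / 2) y = 0`; when `S` is the Schwarzian derivative of `u`, these are the functions
`u ^ i / u_x²` with `i ≤ 4`. -/
def bolOperator (D : Derivation k A A) (S h : A) : A :=
  D (D (D (D (D h)))) + 10 * S * D (D (D h)) + 15 * D S * D (D h)
    + (9 * D (D S) + 16 * S ^ 2) * D h + (2 * D (D (D S)) + 16 * S * D S) * h

/-- The density `(S + h) (S + h / 9) / 2` of the Krichever–Novikov equation `u_t = u_x (S + h)`,
where `S` is the Schwarzian derivative of `u` and `h = f(u) / u_x²`. -/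
def knDensity (k : Type*) [Field k] {A : Type*} [CommRing A] [Algebra k A] (S h : A) : A :=
  (1 / 2 : k) • ((S + h) * (S + (1 / 9 : k) • h))

/-- The flux belonging to `knDensity`. The last summand comes from integrating Bol's operator:
`bolOperator D S h - 2 (S h_xxx + 4 S² h_x)` is an `x`-derivative. -/
def knFlux (D : Derivation k A A) (S h : A) : A :=
  (1 / 2 : k) • D (S + h) ^ 2 - (S + h) * D (D (S + h)) - (S + h) ^ 3
    + (4 / 9 : k) • (h * D (D (S + h)) - D h * D (S + h) + D (D h) * (S + h) + (S + h) ^ 2 * h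
      + (1 / 2 : k) • D h ^ 2 - h * D (D h) + 4 * h ^ 2 * S + 4 * h * S ^ 2 + (4 / 3 : k) • h ^ 3)
    + (2 / 9 : k) • (D (D (D (D h))) + 8 * S * D (D h) + 7 * D S * D h + 2 * D (D S) * h
      + 8 * S ^ 2 * h)

/-- The quantity whose `x`-derivative is `T₂ₐ - knDensity`; here `w` is the pre-Schwarzian of `u`
and `h n` is the weighted jet `u_x ^ (n - 2) * f⁽ⁿ⁾(u)`. -/
def knPotential (k : Type*) [Field k] {A : Type*} [CommRing A] [Algebra k A] (w : A)
    (h : ℕ → A) : A :=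
  (1 / 2 : k) • w ^ 3 - (5 / 9 : k) • (w * h 0 + h 1)

/-- The density `T₂ₐ` in terms of the pre-Schwarzian `w`, the Schwarzian `S` and the weighted
jets `h n = u_x ^ (n - 2) * f⁽ⁿ⁾(u)`. -/
def projectiveT2a (k : Type*) [Field k] {A : Type*} [CommRing A] [Algebra k A] (w S : A)
    (h : ℕ → A) : A :=
  (1 / 2 : k) • S ^ 2 + (3 / 2 : k) • (w ^ 2 * S) + (3 / 4 : k) • w ^ 4
    + (5 / 6 : k) • (w ^ 2 * h 0) + (1 / 18 : k) • h 0 ^ 2 - (5 / 9 : k) • h 2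

/-- The flux `X₂ₐ` in terms of the pre-Schwarzian `w`, the Schwarzian `S`, its first two
`x`-derivatives `S₁`, `S₂` and the weighted jets `h n = u_x ^ (n - 2) * f⁽ⁿ⁾(u)`. -/
def projectiveX2a (k : Type*) [Field k] {A : Type*} [CommRing A] [Algebra k A] (w S S₁ S₂ : A)
    (h : ℕ → A) : A :=
  (1 / 2 : k) • S₁ ^ 2 - S * S₂ - S ^ 3 + (4 / 3 : k) • (S ^ 2 * h 0)
    + (2 / 9 : k) • (S * h 0 ^ 2) + (1 / 27 : k) • h 0 ^ 3 + (5 / 9 : k) • (h 0 * h 2)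
    - (5 / 18 : k) • h 1 ^ 2 + (2 / 9 : k) • h 4
    + w * ((5 / 3 : k) • (S * h 1) - (5 / 3 : k) • (S₁ * h 0) - (5 / 9 : k) • (h 0 * h 1)
      - (4 / 9 : k) • h 3)
    + w ^ 2 * ((25 / 18 : k) • h 0 ^ 2 - (3 / 2 : k) • S₂ - S * h 0 - (3 / 2 : k) • S ^ 2
      - (5 / 6 : k) • h 2)
    + w ^ 3 * ((7 / 3 : k) • h 1 - (3 / 2 : k) • S₁)
    - w ^ 4 * ((23 / 12 : k) • h 0 + (3 / 4 : k) • S)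

variable [CharZero k]

theorem schwarzian_evolution {K : A} (hp : Dt p = D (p * K)) (hcomm : Function.Commute Dt D) :
    Dt (schwarzian D p) =
      D (D (D K)) + 2 * schwarzian D p * D K + D (schwarzian D p) * K := by
  simp only [schwarzian, map_sub, hcomm _, preSchwarzian_evolution hp hcomm, Derivation.map_smul,
    pow_two, Derivation.leibniz, map_add, smul_eq_mul]
  algebra

theorem bolOperator_weightedJet {φ : ℕ → A} (hφ : ∀ n, D (φ n) = p * φ (n + 1)) :
    bolOperator D (schwarzian D p) (weightedJet p φ 0) = weightedJet p φ 5 := by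
  simp only [bolOperator, derivation_weightedJet_of_chain hφ, derivation_preSchwarzian,
    derivation_ofNat, map_add, map_sub, Derivation.map_natCast, Derivation.map_smul, pow_two,
    Derivation.leibniz, smul_eq_mul]
  algebra

theorem knDensity_balance {S h : A}
    (hS : Dt S = D (D (D (S + h))) + 2 * S * D (S + h) + D S * (S + h))
    (hh : Dt h = (S + h) * D h - 2 * D (S + h) * h) :
    Dt (knDensity k S h) + D (knFlux D S h) = (2 / 9 : k) • bolOperator D S h := by
  simp only [knDensity, knFlux, bolOperator, hS, hh, derivation_ofNat, map_add, map_sub,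
    Derivation.map_smul, pow_succ, pow_zero, one_mul, Derivation.leibniz, smul_eq_mul]
  algebra

section ProjectiveForm

variable {φ : ℕ → A} (hφ : ∀ n, D (φ n) = p * φ (n + 1))

include hφ

theorem knDensity_add_derivation_knPotential :
    knDensity k (schwarzian D p) (weightedJet p φ 0)
        + D (knPotential k (preSchwarzian D p) (weightedJet p φ)) =
      projectiveT2a k (preSchwarzian D p) (schwarzian D p) (weightedJet p φ) := by
  simp only [knDensity, knPotential, projectiveT2a, derivation_weightedJet_of_chain hφ,
    derivation_preSchwarzian, map_add, map_sub, Derivation.map_smul, pow_succ, pow_zero, one_mul,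
    Derivation.leibniz, smul_eq_mul]
  algebra

theorem knFlux_sub_derivation_knPotential (hcomm : Function.Commute Dt D)
    (hp : Dt p = D (p * (schwarzian D p + weightedJet p φ 0)))
    (hφt : ∀ n, Dt (φ n) = p * (schwarzian D p + weightedJet p φ 0) * φ (n + 1)) :
    knFlux D (schwarzian D p) (weightedJet p φ 0)
        - Dt (knPotential k (preSchwarzian D p) (weightedJet p φ)) =
      projectiveX2a k (preSchwarzian D p) (schwarzian D p) (D (schwarzian D p))
        (D (D (schwarzian D p))) (weightedJet p φ) := by
  simp only [knFlux, knPotential, projectiveX2a, preSchwarzian_evolution hp hcomm,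
    derivation_weightedJet (units_evolution hp) hφt, derivation_weightedJet_of_chain hφ,
    derivation_preSchwarzian, derivation_ofNat, map_add, map_sub, Derivation.map_natCast,
    Derivation.map_smul, pow_succ, pow_zero, one_mul, Derivation.leibniz, smul_eq_mul]
  algebra

theorem projectiveT2a_balance (hcomm : Function.Commute Dt D)
    (hp : Dt p = D (p * (schwarzian D p + weightedJet p φ 0)))
    (hφt : ∀ n, Dt (φ n) = p * (schwarzian D p + weightedJet p φ 0) * φ (n + 1)) :
    Dt (projectiveT2a k (preSchwarzian D p) (schwarzian D p) (weightedJet p φ))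
        + D (projectiveX2a k (preSchwarzian D p) (schwarzian D p) (D (schwarzian D p))
          (D (D (schwarzian D p))) (weightedJet p φ)) =
      (2 / 9 : k) • weightedJet p φ 5 := by
  have exact_part_cancels := hcomm (knPotential k (preSchwarzian D p) (weightedJet p φ))
  rw [← knDensity_add_derivation_knPotential hφ,
    ← knFlux_sub_derivation_knPotential hφ hcomm hp hφt, map_add, map_sub, exact_part_cancels,
    add_add_sub_cancel, ← bolOperator_weightedJet hφ]
  exact knDensity_balance (schwarzian_evolution hp hcomm) (weightedJet_zero_evolution hp hφ hφt)

end ProjectiveForm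

theorem secondDerivation_units :
    D (D p) = (schwarzian D p + (3 / 2 : k) • preSchwarzian D p ^ 2) * p := by
  simp only [derivation_units, derivation_preSchwarzian, Derivation.leibniz, smul_eq_mul]
  algebra

theorem thirdDerivation_units :
    D (D (D p)) =
      (D (schwarzian D p) + 4 * preSchwarzian D p * schwarzian D p
        + 3 * preSchwarzian D p ^ 3) * p := by
  rw [secondDerivation_units]
  simp only [derivation_units, derivation_preSchwarzian, map_add, Derivation.map_smul, pow_two,
    Derivation.leibniz, smul_eq_mul]
  algebra

theorem fourthDerivation_units :
    D (D (D (D p))) =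
      (D (D (schwarzian D p)) + 5 * preSchwarzian D p * D (schwarzian D p)
        + 4 * schwarzian D p ^ 2 + 15 * preSchwarzian D p ^ 2 * schwarzian D p
        + (15 / 2 : k) • preSchwarzian D p ^ 4) * p := by
  rw [thirdDerivation_units]
  simp only [derivation_units, derivation_preSchwarzian, derivation_ofNat, map_add,
    pow_succ, pow_zero, one_mul, Derivation.leibniz, smul_eq_mul]
  algebra

end ProjectiveStructure

section SmoothFunctions

variable {E : Type*} [NormedAddCommGroup E] [NormedSpace ℝ E]

variable (E) in
/-- The algebra of smooth real functions on a normed space, on which the directional derivatives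
act as commuting derivations. -/
def smoothFunctions : Subalgebra ℝ (E → ℝ) where
  carrier := {a | ContDiff ℝ ∞ a}
  mul_mem' ha hb := (Set.mem_ofPred.mp ha).mul (Set.mem_ofPred.mp hb)
  add_mem' ha hb := (Set.mem_ofPred.mp ha).add (Set.mem_ofPred.mp hb)
  algebraMap_mem' _ := Set.mem_ofPred.mpr contDiff_const

theorem mem_smoothFunctions {a : E → ℝ} : a ∈ smoothFunctions E ↔ ContDiff ℝ ∞ a :=
  Iff.rfl

namespace smoothFunctions

theorem contDiff (a : smoothFunctions E) : ContDiff ℝ ∞ a.1 :=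
  mem_smoothFunctions.mp a.2

theorem differentiableAt (a : smoothFunctions E) (y : E) : DifferentiableAt ℝ a.1 y :=
  (contDiff a).differentiable (by simp) y

theorem contDiff_fderiv (a : smoothFunctions E) : ContDiff ℝ ∞ (fderiv ℝ a.1) :=
  (contDiff a).fderiv_right (by simp)

/-- The derivative in the direction `v`, as a derivation of the algebra of smooth functions. -/
noncomputable def dirDeriv (v : E) : Derivation ℝ (smoothFunctions E) (smoothFunctions E) :=
  Derivation.mk'
    { toFun a := ⟨fun y => fderiv ℝ a.1 y v,
        mem_smoothFunctions.mpr ((contDiff_fderiv a).clm_apply contDiff_const)⟩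
      map_add' a b := by
        ext y
        simp [fderiv_add (differentiableAt a y) (differentiableAt b y)]
      map_smul' c a := by
        ext y
        simp [fderiv_const_smul (differentiableAt a y)] }
    fun a b => by
      ext y
      simp [fderiv_mul (differentiableAt a y) (differentiableAt b y)]

theorem dirDeriv_apply (v : E) (a : smoothFunctions E) (y : E) :
    (dirDeriv v a).1 y = fderiv ℝ a.1 y v :=
  rfl

theorem dirDeriv_commute (v w : E) : Function.Commute (dirDeriv v) (dirDeriv w) := by
  intro a
  ext y
  have hsymm : IsSymmSndFDerivAt ℝ a.1 y :=
    (contDiff a).contDiffAt.isSymmSndFDerivAt (by simpa using ENat.LEInfty.out)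
  have hd : DifferentiableAt ℝ (fderiv ℝ a.1) y := (contDiff_fderiv a).differentiable (by simp) y
  have second_deriv (v w : E) :
      (dirDeriv v (dirDeriv w a)).1 y = fderiv ℝ (fderiv ℝ a.1) y v w := by
    simp [dirDeriv, fderiv_clm_apply hd (differentiableAt_const _)]
  rw [second_deriv, second_deriv, hsymm v w]

/-- The smooth function `f ∘ a`. -/
def comp (f : ℝ → ℝ) (hf : ContDiff ℝ ∞ f) (a : smoothFunctions E) : smoothFunctions E :=
  ⟨f ∘ a.1, mem_smoothFunctions.mpr (hf.comp (contDiff a))⟩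

/-- The sequence of functions `f⁽ⁿ⁾(a)`. -/
noncomputable def compJet (f : ℝ → ℝ) (hf : ContDiff ℝ ∞ f) (a : smoothFunctions E) (n : ℕ) :
    smoothFunctions E :=
  comp (deriv^[n] f) (hf.iterate_deriv n) a

theorem dirDeriv_compJet (v : E) {f : ℝ → ℝ} (hf : ContDiff ℝ ∞ f) (a : smoothFunctions E)
    (n : ℕ) : dirDeriv v (compJet f hf a n) = dirDeriv v a * compJet f hf a (n + 1) := by
  ext y
  have hfn : HasDerivAt (deriv^[n] f) (deriv^[n + 1] f (a.1 y)) (a.1 y) := by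
    rw [iterate_succ_apply']
    exact ((hf.iterate_deriv n).differentiable (by simp) (a.1 y)).hasDerivAt
  have chain_rule := (hfn.comp_hasFDerivAt y (differentiableAt a y).hasFDerivAt).fderiv
  simp [dirDeriv_apply, compJet, comp, chain_rule, mul_comm]

/-- Evaluation at a point. -/
def evalAt (y : E) : smoothFunctions E →ₐ[ℝ] ℝ :=
  (Pi.evalAlgHom ℝ (fun _ => ℝ) y).comp (smoothFunctions E).val

theorem evalAt_compJet (y : E) {f : ℝ → ℝ} (hf : ContDiff ℝ ∞ f) (a : smoothFunctions E) (n : ℕ) :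
    evalAt y (compJet f hf a n) = deriv^[n] f (evalAt y a) :=
  rfl

theorem ext_evalAt {a b : smoothFunctions E} (h : ∀ y, evalAt y a = evalAt y b) : a = b :=
  Subtype.ext (funext h)

theorem isUnit_of_evalAt_ne_zero {a : smoothFunctions E} (ha : ∀ y, evalAt y a ≠ 0) : IsUnit a :=
  IsUnit.of_mul_eq_one ⟨fun y => (a.1 y)⁻¹, mem_smoothFunctions.mpr ((contDiff a).inv ha)⟩
    (ext_evalAt fun y => mul_inv_cancel₀ (ha y))

/-- A smooth function on the `(t, x)`-plane as a function of two real variables. -/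
noncomputable def curried (a : smoothFunctions (ℝ × ℝ)) : ℝ → ℝ → ℝ :=
  fun t x => evalAt (t, x) a

theorem curried_apply (a : smoothFunctions (ℝ × ℝ)) (t x : ℝ) :
    curried a t x = evalAt (t, x) a :=
  rfl

theorem pdx_curried (a : smoothFunctions (ℝ × ℝ)) :
    pdx (curried a) = curried (dirDeriv (0, 1) a) := by
  ext t x
  exact ((differentiableAt a (t, x)).hasFDerivAt.comp_hasDerivAt x
    ((hasDerivAt_const x t).prodMk (hasDerivAt_id x))).deriv

theorem pdt_curried (a : smoothFunctions (ℝ × ℝ)) :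
    pdt (curried a) = curried (dirDeriv (1, 0) a) := by
  ext t x
  exact ((differentiableAt a (t, x)).hasFDerivAt.comp_hasDerivAt t
    ((hasDerivAt_id t).prodMk (hasDerivAt_const t x))).deriv

end smoothFunctions

end SmoothFunctions

section KricheverNovikov

open smoothFunctions

variable {f : ℝ → ℝ} (hf : ContDiff ℝ ∞ f) {u : smoothFunctions (ℝ × ℝ)}
  {p : (smoothFunctions (ℝ × ℝ))ˣ} (hp : dirDeriv (0, 1) u = p)

include hp

theorem T2a_curried :
    T2a f (curried u) = curried (projectiveT2a ℝ (preSchwarzian (dirDeriv (0, 1)) p)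
      (schwarzian (dirDeriv (0, 1)) p) (weightedJet p (compJet f hf u))) := by
  ext t x
  have hpx : evalAt (t, x) (p : smoothFunctions (ℝ × ℝ)) ≠ 0 := (p.isUnit.map _).ne_zero
  simp only [T2a, pdx_curried, hp, curried_apply]
  rw [secondDerivation_units, derivation_units]
  simp only [projectiveT2a, weightedJet, map_add, map_sub, map_mul, map_pow, map_smul,
    map_units_inv, smul_eq_mul, evalAt_compJet, iterate_succ_apply', iterate_zero_apply]
  field_simp
  ring

theorem X2a_curried :
    X2a f (curried u) = curried (projectiveX2a ℝ (preSchwarzian (dirDeriv (0, 1)) p)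
      (schwarzian (dirDeriv (0, 1)) p) (dirDeriv (0, 1) (schwarzian (dirDeriv (0, 1)) p))
      (dirDeriv (0, 1) (dirDeriv (0, 1) (schwarzian (dirDeriv (0, 1)) p)))
      (weightedJet p (compJet f hf u))) := by
  ext t x
  have hpx : evalAt (t, x) (p : smoothFunctions (ℝ × ℝ)) ≠ 0 := (p.isUnit.map _).ne_zero
  simp only [X2a, pdx_curried, hp, curried_apply]
  rw [fourthDerivation_units, thirdDerivation_units, secondDerivation_units, derivation_units]
  simp only [projectiveX2a, weightedJet, map_add, map_sub, map_mul, map_pow, map_smul,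
    map_ofNat, map_units_inv, smul_eq_mul, evalAt_compJet, iterate_succ_apply', iterate_zero_apply]
  field_simp
  ring

theorem dirDeriv_time_of_isGKN (hsol : isGKN f (curried u)) :
    dirDeriv (1, 0) u =
      p * (schwarzian (dirDeriv (0, 1)) p + weightedJet p (compJet f hf u) 0) := by
  refine ext_evalAt fun ⟨t, x⟩ => ?_
  have hpx : evalAt (t, x) (p : smoothFunctions (ℝ × ℝ)) ≠ 0 := (p.isUnit.map _).ne_zero
  have hsol_tx := hsol t x
  simp only [pdx_curried, pdt_curried, hp, curried_apply] at hsol_tx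
  rw [secondDerivation_units, derivation_units] at hsol_tx
  rw [hsol_tx]
  simp only [weightedJet, map_add, map_mul, map_pow, map_smul, map_units_inv, smul_eq_mul,
    evalAt_compJet, iterate_zero_apply]
  field_simp
  ring

end KricheverNovikov

open Polynomial in
theorem iterate_deriv_polynomial {𝕜 : Type*} [NontriviallyNormedField 𝕜] (P : 𝕜[X]) (n : ℕ) :
    deriv^[n] (fun v => P.eval v) = fun v => (derivative^[n] P).eval v := by
  induction n generalizing P with
  | zero => rfl
  | succ n ih =>
    have deriv_eval : deriv (fun v => P.eval v) = fun v => (derivative P).eval v :=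
      funext fun _ => P.deriv
    rw [iterate_succ_apply, iterate_succ_apply, deriv_eval, ih]

open Polynomial in
theorem iterate_deriv_quartic (a b c d e v : ℝ) :
    deriv^[5] (fun v => a * v ^ 4 + b * v ^ 3 + c * v ^ 2 + d * v + e) v = 0 := by
  have hP := iterate_deriv_polynomial (C a * X ^ 4 + C b * X ^ 3 + C c * X ^ 2 + C d * X + C e) 5
  rw [iterate_derivative_eq_zero (by compute_degree!)] at hP
  simpa using congrFun hP v

open smoothFunctions in
theorem KN_conservation_law_T2a_general (f : ℝ → ℝ) (hf : ContDiff ℝ ∞ f) (u : ℝ → ℝ → ℝ)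
    (hu : ContDiff ℝ ∞ (uncurry u)) (hux : ∀ t x, pdx u t x ≠ 0) (hsol : isGKN f u) (t x : ℝ) :
    pdt (T2a f u) t x + pdx (X2a f u) t x = 2 / 9 * (pdx u t x ^ 3 * deriv^[5] f (u t x)) := by
  obtain ⟨v, rfl⟩ : ∃ v : smoothFunctions (ℝ × ℝ), u = curried v :=
    ⟨⟨uncurry u, mem_smoothFunctions.mpr hu⟩, rfl⟩
  rw [pdx_curried] at hux
  have p_isUnit : IsUnit (dirDeriv (0, 1) v) := isUnit_of_evalAt_ne_zero fun y => hux y.1 y.2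
  obtain ⟨p, hp⟩ : ∃ p, dirDeriv (0, 1) v = Units.val p := p_isUnit.imp fun _ => Eq.symm
  have flow := dirDeriv_time_of_isGKN hf hp hsol
  have mixed := dirDeriv_commute (1, 0) (0, 1) v
  rw [hp, flow] at mixed
  have hφ (n : ℕ) := dirDeriv_compJet (0, 1) hf v n
  have hφt (n : ℕ) := dirDeriv_compJet (1, 0) hf v n
  simp only [hp] at hφ
  simp only [flow] at hφt
  have balance := projectiveT2a_balance hφ (dirDeriv_commute (1, 0) (0, 1)) mixed hφt
  have balance_tx := congrArg (evalAt (t, x)) balance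
  rw [T2a_curried hf hp, X2a_curried hf hp, pdt_curried, pdx_curried, pdx_curried, hp]
  have hpx : evalAt (t, x) (p : smoothFunctions (ℝ × ℝ)) ≠ 0 := (p.isUnit.map _).ne_zero
  simp only [weightedJet, map_add, map_mul, map_pow, map_smul, map_units_inv, smul_eq_mul,
    evalAt_compJet] at balance_tx
  simp only [curried_apply]
  rw [balance_tx]
  field_simp


/-- `(T₂ₐ, X₂ₐ)` is a conservation law of the KN equation (quartic `f`). -/
theorem KN_conservation_law_T2a (C₁ C₂ C₃ C₄ C₅ : ℝ) (f : ℝ → ℝ)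
    (hf : ∀ v, f v = C₁ * v^4 + C₂ * v^3 + C₃ * v^2 + C₄ * v + C₅)
    (u : ℝ → ℝ → ℝ) (hu : ContDiff ℝ (⊤ : ℕ∞) (Function.uncurry u))
    (hux : ∀ t x, pdx u t x ≠ 0)
    (hsol : isGKN f u) :
    consLaw (T2a f u) (X2a f u) := by
  obtain rfl : f = fun v => C₁ * v ^ 4 + C₂ * v ^ 3 + C₃ * v ^ 2 + C₄ * v + C₅ := funext hf
  intro t x
  rw [KN_conservation_law_T2a_general _ (by fun_prop) u hu hux hsol, iterate_deriv_quartic,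
    mul_zero, mul_zero]
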